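/- arXiv:2101.12426 — 4 statements merged into one kernel-verified Lean document; each statement's English description precedes it below -/
import Mathlib

section
/- Let n ≥ 1, let ε > 0 and set p = 1/4 + ε. Let C₁, C₂ ⊆ 𝔽₂ⁿ be nonempty codes such that for all (x₁, y₁), (x₂, y₂) ∈ C₁ × C₂ with (x₁, y₁) ≠ (x₂, y₂), the Hamming distance between x₁ ⊕ y₁ and x₂ ⊕ y₂ is strictly greater than 2np. Then |C₁| · |C₂| < 1/(4ε) + 1. -/
lemma aux_dist {n : ℕ} (u v : Fin n → ZMod 2) :
    (hammingDist u v : ℝ) = ∑ i, (1 - (if u i = 0 then (1:ℝ) else -1) * (if v i = 0 then (1:ℝ) else -1)) / 2 := by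
  unfold hammingDist
  rw [Finset.card_filter]
  push_cast
  refine Finset.sum_congr rfl fun i _ => ?_
  have h : ∀ a b : ZMod 2, (a ≠ b ↔ ¬ (a = 0 ↔ b = 0)) := by decide
  simp only [h (u i) (v i)]
  clear h
  by_cases ha : u i = 0 <;> by_cases hb : v i = 0 <;> simp [ha, hb] <;> norm_num

lemma aux_plotkin {α : Type*} {n : ℕ} (S : Finset α) (f : α → Fin n → ZMod 2) :
    ∑ q ∈ S, ∑ r ∈ S, (hammingDist (f q) (f r) : ℝ) ≤ n * (S.card : ℝ) ^ 2 / 2 := by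
  have key : ∑ q ∈ S, ∑ r ∈ S, (hammingDist (f q) (f r) : ℝ)
      = ∑ i : Fin n, ((S.card : ℝ) ^ 2 - (∑ q ∈ S, if f q i = 0 then (1:ℝ) else -1) ^ 2) / 2 := by
    simp_rw [aux_dist]
    have h1 : ∀ q ∈ S, ∑ r ∈ S, ∑ i : Fin n, (1 - (if f q i = 0 then (1:ℝ) else -1) * (if f r i = 0 then (1:ℝ) else -1)) / 2
      = ∑ i : Fin n, ∑ r ∈ S, (1 - (if f q i = 0 then (1:ℝ) else -1) * (if f r i = 0 then (1:ℝ) else -1)) / 2 :=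
      fun q _ => Finset.sum_comm
    rw [Finset.sum_congr rfl h1, Finset.sum_comm]
    refine Finset.sum_congr rfl fun i _ => ?_
    simp_rw [← Finset.sum_div, Finset.sum_sub_distrib]
    rw [pow_two (∑ q ∈ S, if f q i = 0 then (1:ℝ) else -1), Finset.sum_mul_sum]
    simp only [Finset.sum_const, nsmul_eq_mul, mul_one]
    ring
  rw [key]
  calc _ ≤ ∑ i : Fin n, (S.card : ℝ) ^ 2 / 2 := by
        refine Finset.sum_le_sum fun i _ => ?_
        have := sq_nonneg (∑ q ∈ S, if f q i = 0 then (1:ℝ) else -1)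
        linarith
    _ = _ := by simp; ring

theorem stmt_0 (n : ℕ) (hn : 1 ≤ n) (ε p : ℝ) (hε : 0 < ε) (hp : p = 1 / 4 + ε)
    (C₁ C₂ : Finset (Fin n → ZMod 2)) (hC₁ : C₁.Nonempty) (hC₂ : C₂.Nonempty)
    (hzero : ∀ x₁ ∈ C₁, ∀ y₁ ∈ C₂, ∀ x₂ ∈ C₁, ∀ y₂ ∈ C₂, (x₁, y₁) ≠ (x₂, y₂) →
      2 * (n : ℝ) * p < (hammingDist (x₁ + y₁) (x₂ + y₂) : ℝ)) :
    (C₁.card : ℝ) * (C₂.card : ℝ) < 1 / (4 * ε) + 1 := by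
  have hM : (C₁.card : ℝ) * (C₂.card : ℝ) = ((C₁ ×ˢ C₂).card : ℝ) := by
    rw [Finset.card_product]; push_cast; rfl
  rw [hM]
  have hz : ∀ q ∈ C₁ ×ˢ C₂, ∀ r ∈ C₁ ×ˢ C₂, q ≠ r →
      2 * (n : ℝ) * p < (hammingDist (q.1 + q.2) (r.1 + r.2) : ℝ) := by
    rintro ⟨a, b⟩ hq ⟨c, d⟩ hr hne
    rw [Finset.mem_product] at hq hr
    exact hzero a hq.1 b hq.2 c hr.1 d hr.2 hne
  generalize C₁ ×ˢ C₂ = S at hz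
  have hpos : 0 < 1 / (4 * ε) := by positivity
  by_cases h1 : S.card ≤ 1
  · have : (S.card : ℝ) ≤ 1 := by exact_mod_cast h1
    linarith
  push Not at h1
  obtain ⟨q₀, hq₀, r₀, hr₀, hne⟩ := Finset.one_lt_card.1 h1
  have hle : ∀ q ∈ S, ∀ r ∈ S, 2 * (n : ℝ) * p - (if q = r then 2 * (n : ℝ) * p else 0)
      ≤ (hammingDist (q.1 + q.2) (r.1 + r.2) : ℝ) := by
    intro q hq r hr
    by_cases h : q = r
    · simp [h]
    · simpa [h] using (hz q hq r hr h).le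
  have hlt : ∑ q ∈ S, ∑ r ∈ S, (2 * (n : ℝ) * p - (if q = r then 2 * (n : ℝ) * p else 0))
      < ∑ q ∈ S, ∑ r ∈ S, (hammingDist (q.1 + q.2) (r.1 + r.2) : ℝ) := by
    refine Finset.sum_lt_sum (fun q hq => Finset.sum_le_sum (hle q hq)) ⟨q₀, hq₀, ?_⟩
    refine Finset.sum_lt_sum (hle q₀ hq₀) ⟨r₀, hr₀, ?_⟩
    simpa [hne] using hz q₀ hq₀ r₀ hr₀ hne
  have heq : ∑ q ∈ S, ∑ r ∈ S, (2 * (n : ℝ) * p - (if q = r then 2 * (n : ℝ) * p else 0))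
      = 2 * (n : ℝ) * p * ((S.card : ℝ) * (S.card - 1)) := by
    have : ∀ q ∈ S, ∑ r ∈ S, (2 * (n : ℝ) * p - (if q = r then 2 * (n : ℝ) * p else 0))
        = 2 * (n : ℝ) * p * (S.card - 1) := by
      intro q hq
      rw [Finset.sum_sub_distrib, Finset.sum_ite_eq]
      simp only [hq, if_true, Finset.sum_const, nsmul_eq_mul]
      ring
    rw [Finset.sum_congr rfl this, Finset.sum_const, nsmul_eq_mul]
    ring
  have hub := aux_plotkin S (fun q => q.1 + q.2)
  rw [heq] at hlt
  have h2 := hlt.trans_le hub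
  have hn' : (0:ℝ) < n := by exact_mod_cast hn
  have hc : (0:ℝ) < S.card := by exact_mod_cast (by omega : 0 < S.card)
  subst hp
  have h3 : ((n:ℝ) * S.card / 2) * ((1 + 4 * ε) * (S.card - 1)) < ((n:ℝ) * S.card / 2) * S.card := by
    linarith
  have h4 := lt_of_mul_lt_mul_left h3 (by positivity)
  have h5 : (S.card : ℝ) - 1 < 1 / (4 * ε) := by
    rw [lt_div_iff₀ (by positivity)]
    linarith
  linarith
end

section
/- Let X₁, X₂ be finite sets, let G := conv{ P^{⊗2}⊗Q^{⊗2} : P ∈ Δ(X₁), Q ∈ Δ(X₂) } ⊆ Δ(X₁²×X₂²), and let D̄ ∈ Δ(X₁²×X₂²) satisfy d₁(D̄, D) ≥ γ for every D ∈ G, where γ > 0. Then there exists a tensor T : X₁²×X₂² → ℝ with ‖T‖_∞ ≤ 2 such that ⟨P^{⊗2}⊗Q^{⊗2}, T⟩ ≥ 0 for all P ∈ Δ(X₁), Q ∈ Δ(X₂), and ⟨D̄, T⟩ ≤ −γ. -/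
/-- `P` is a probability distribution on the finite set `X`. -/
def IsDist {X : Type*} [Fintype X] (P : X → ℝ) : Prop :=
  (∀ x, 0 ≤ P x) ∧ ∑ x, P x = 1

/-- The convex hull of the products `P^{⊗2} ⊗ Q^{⊗2}` with `P ∈ Δ(X₁)`, `Q ∈ Δ(X₂)`,
realized as the set of all finite mixtures of such products. -/
def goodSet (X₁ X₂ : Type*) [Fintype X₁] [Fintype X₂] : Set (X₁ × X₁ × X₂ × X₂ → ℝ) :=
  {D | ∃ (k : ℕ) (_ : 1 ≤ k) (lam : Fin k → ℝ) (P : Fin k → X₁ → ℝ) (Q : Fin k → X₂ → ℝ),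
    (∀ i, 0 ≤ lam i) ∧ (∑ i, lam i = 1) ∧ (∀ i, IsDist (P i)) ∧ (∀ i, IsDist (Q i)) ∧
    D = fun z => ∑ i, lam i * P i z.1 * P i z.2.1 * Q i z.2.2.1 * Q i z.2.2.2}

theorem hull_sub_goodSet (X₁ X₂ : Type*) [Fintype X₁] [Fintype X₂] :
    convexHull ℝ {D : X₁ × X₁ × X₂ × X₂ → ℝ | ∃ P Q, IsDist P ∧ IsDist Q ∧
      D = fun z => P z.1 * P z.2.1 * Q z.2.2.1 * Q z.2.2.2} ⊆ goodSet X₁ X₂ := by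
  intro D hD
  obtain ⟨ι, _, w, v, hw0, hw1, hv, rfl⟩ := mem_convexHull_iff_exists_fintype.1 hD
  choose P Q hP hQ hv using hv
  let e := (Fintype.equivFin ι).symm
  have hι : Nonempty ι := by
    by_contra h
    rw [not_nonempty_iff] at h
    simp at hw1
  refine ⟨Fintype.card ι, Fintype.card_pos, fun i => w (e i), fun i => P (e i), fun i => Q (e i),
    fun i => hw0 _, ?_, fun i => hP _, fun i => hQ _, ?_⟩
  · rw [← hw1]; exact Equiv.sum_comp e w
  · funext z
    rw [Finset.sum_apply]
    rw [← Equiv.sum_comp e]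
    refine Finset.sum_congr rfl fun i _ => ?_
    rw [Pi.smul_apply, hv (e i), smul_eq_mul]
    ring

theorem stmt_9 (X₁ X₂ : Type*) [Fintype X₁] [Fintype X₂]
    (γ : ℝ) (hγ : 0 < γ) (Dbar : X₁ × X₁ × X₂ × X₂ → ℝ) (hDbar : IsDist Dbar)
    (hfar : ∀ D ∈ goodSet X₁ X₂, γ ≤ ∑ z, |Dbar z - D z|) :
    ∃ T : X₁ × X₁ × X₂ × X₂ → ℝ,
      (∀ z, |T z| ≤ 2) ∧
      (∀ (P : X₁ → ℝ) (Q : X₂ → ℝ), IsDist P → IsDist Q →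
        0 ≤ ∑ z : X₁ × X₁ × X₂ × X₂, P z.1 * P z.2.1 * Q z.2.2.1 * Q z.2.2.2 * T z) ∧
      ∑ z, Dbar z * T z ≤ -γ := by
  classical
  obtain ⟨hD0, hD1⟩ := hDbar
  have hne : Nonempty (X₁ × X₁ × X₂ × X₂) := by
    by_contra h
    rw [not_nonempty_iff] at h
    simp at hD1
  obtain ⟨x, -, y, -⟩ := hne.some
  set S : Set (X₁ × X₁ × X₂ × X₂ → ℝ) := {D | ∃ P Q, IsDist P ∧ IsDist Q ∧
      D = fun z => P z.1 * P z.2.1 * Q z.2.2.1 * Q z.2.2.2} with hS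
  let B : Set (X₁ × X₁ × X₂ × X₂ → ℝ) := {D | ∑ z, |Dbar z - D z| < γ}
  have hBo : IsOpen B := isOpen_lt (by fun_prop) continuous_const
  have hBc : Convex ℝ B := by
    intro a ha b hb s t hs ht hst
    simp only [B, Set.mem_ofPred_eq] at *
    have h1 : ∑ z, |Dbar z - (s • a + t • b) z| ≤
        s * (∑ z, |Dbar z - a z|) + t * ∑ z, |Dbar z - b z| := by
      rw [Finset.mul_sum, Finset.mul_sum, ← Finset.sum_add_distrib]
      refine Finset.sum_le_sum fun z _ => ?_
      have : Dbar z - (s • a + t • b) z = s * (Dbar z - a z) + t * (Dbar z - b z) := by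
        simp only [Pi.add_apply, Pi.smul_apply, smul_eq_mul]
        linear_combination (-Dbar z) * hst
      rw [this]
      refine (abs_add_le _ _).trans ?_
      rw [abs_mul, abs_mul, abs_of_nonneg hs, abs_of_nonneg ht]
    refine h1.trans_lt ?_
    rcases hs.eq_or_lt with h | h
    · have : t = 1 := by linarith
      subst h; subst this; linarith
    · have h2 := mul_lt_mul_of_pos_left ha h
      have h3 := mul_le_mul_of_nonneg_left hb.le ht
      have : s * γ + t * γ = γ := by rw [← add_mul, hst, one_mul]
      linarith
  have hdisj : Disjoint B (convexHull ℝ S) := by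
    rw [Set.disjoint_left]
    intro D hDB hDS
    exact absurd (hfar D (hull_sub_goodSet X₁ X₂ hDS)) (not_le.2 hDB)
  obtain ⟨f, u, hfB, hfS⟩ := geometric_hahn_banach_open hBc hBo (convex_convexHull ℝ S) hdisj
  let c : X₁ × X₁ × X₂ × X₂ → ℝ := fun z => f (Pi.single z 1)
  have hf : ∀ D, f D = ∑ z, D z * c z := by
    intro D
    conv_lhs => rw [pi_eq_sum_univ' D]
    rw [map_sum]
    refine Finset.sum_congr rfl fun z _ => ?_
    rw [map_smul, smul_eq_mul]
  have hPQ : ∀ (P : X₁ → ℝ) (Q : X₂ → ℝ), IsDist P → IsDist Q →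
      u ≤ ∑ z : X₁ × X₁ × X₂ × X₂, P z.1 * P z.2.1 * Q z.2.2.1 * Q z.2.2.2 * c z := by
    intro P Q hP hQ
    have := hfS _ (subset_convexHull ℝ S ⟨P, Q, hP, hQ, rfl⟩)
    rwa [hf] at this
  have hsum : ∀ (P : X₁ → ℝ) (Q : X₂ → ℝ), IsDist P → IsDist Q →
      ∑ z : X₁ × X₁ × X₂ × X₂, P z.1 * P z.2.1 * Q z.2.2.1 * Q z.2.2.2 = 1 := by
    intro P Q hP hQ
    simp only [Fintype.sum_prod_type, ← Finset.mul_sum, hQ.2, hP.2, mul_one]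
  obtain ⟨z₀, hz₀⟩ := Finite.exists_max (fun z => |c z|)
  set M := |c z₀| with hM
  have hpt : ∀ {X : Type _} [Fintype X] [DecidableEq X] (a : X), IsDist (Pi.single a (1:ℝ)) := by
    intro X _ _ a
    refine ⟨fun b => ?_, by simp⟩
    by_cases h : b = a
    · subst h; simp
    · simp [h]
  have hpt2 : IsDist (Pi.single y (1:ℝ)) := by
    refine ⟨fun b => ?_, by simp⟩
    by_cases h : b = y
    · subst h; simp
    · simp [h]
  have hbound : ∀ D : X₁ × X₁ × X₂ × X₂ → ℝ, (∀ z, 0 ≤ D z) → ∑ z, D z = 1 →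
      |∑ z, D z * c z| ≤ M := by
    intro D h0 h1
    calc |∑ z, D z * c z| ≤ ∑ z, |D z * c z| := Finset.abs_sum_le_sum_abs _ _
      _ ≤ ∑ z, D z * M := Finset.sum_le_sum fun z _ => by
          rw [abs_mul, abs_of_nonneg (h0 z)]
          exact mul_le_mul_of_nonneg_left (hz₀ z) (h0 z)
      _ = M := by rw [← Finset.sum_mul, h1, one_mul]
  have huM : u ≤ M := by
    refine (hPQ _ _ (hpt x) hpt2).trans ((le_abs_self _).trans
      (hbound _ (fun z => ?_) (hsum _ _ (hpt x) hpt2)))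
    exact mul_nonneg (mul_nonneg (mul_nonneg ((hpt x).1 _) ((hpt x).1 _)) (hpt2.1 _)) (hpt2.1 _)
  have hDb := hbound Dbar hD0 hD1
  have hDu : f Dbar < u := hfB _ (by simpa [B] using hγ)
  have hkey : f Dbar + γ * M ≤ u := by
    have hr : ∀ r, 0 ≤ r → r < γ → f Dbar + r * M ≤ u := by
      intro r h0 h1
      have hmem : Dbar + (r * SignType.sign (c z₀)) • Pi.single z₀ (1:ℝ) ∈ B := by
        simp only [B, Set.mem_ofPred_eq]
        have : ∀ z, |Dbar z - (Dbar + (r * (SignType.sign (c z₀) : ℝ)) •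
              (Pi.single z₀ (1:ℝ) : X₁ × X₁ × X₂ × X₂ → ℝ) : X₁ × X₁ × X₂ × X₂ → ℝ) z|
            ≤ if z = z₀ then r else 0 := by
          intro z
          by_cases h : z = z₀
          · subst h
            rcases lt_trichotomy (c z) 0 with h | h | h <;> simp [h, h0, abs_of_nonneg]
          · simp [h]
        refine (Finset.sum_le_sum fun z _ => this z).trans_lt ?_
        simpa using h1
      have := hfB _ hmem
      rw [map_add, map_smul, smul_eq_mul, mul_assoc] at this
      have h2 : (SignType.sign (c z₀) : ℝ) * f (Pi.single z₀ 1) = M := sign_mul_self (c z₀)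
      rw [h2] at this
      exact this.le
    by_contra! h
    have hMp : 0 < M := by
      rcases (abs_nonneg (c z₀)).eq_or_lt with h' | h'
      · rw [hM, ← h'] at h; linarith
      · exact h'
    have h3 : (u - f Dbar) / M < γ := by rw [div_lt_iff₀ hMp]; linarith
    have h4 := hr (((u - f Dbar) / M + γ) / 2)
      (by have := div_pos (sub_pos.2 hDu) hMp; linarith) (by linarith)
    have h5 : (u - f Dbar) / M * M = u - f Dbar := div_mul_cancel₀ _ hMp.ne'
    nlinarith
  rw [hf] at hkey hDu
  have hDb' := abs_le.1 hDb
  have hMp : 0 < M := by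
    rcases (abs_nonneg (c z₀)).eq_or_lt with h' | h'
    · rw [← hM] at h'; linarith
    · exact h'
  have hexp : ∀ D : X₁ × X₁ × X₂ × X₂ → ℝ, ∑ z, D z = 1 →
      ∑ z, D z * ((c z - u) / M) = ((∑ z, D z * c z) - u) / M := by
    intro D h1
    have : ∀ z, D z * ((c z - u) / M) = (D z * c z - D z * u) / M := fun z => by ring
    simp only [this]
    rw [← Finset.sum_div, Finset.sum_sub_distrib, ← Finset.sum_mul, h1, one_mul]
  refine ⟨fun z => (c z - u) / M, fun z => ?_, fun P Q hP hQ => ?_, ?_⟩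
  · rw [abs_div, abs_of_pos hMp, div_le_iff₀ hMp]
    have := abs_le.1 (hz₀ z)
    rw [abs_le]
    constructor <;> linarith [this.1, this.2]
  · rw [hexp (fun z => P z.1 * P z.2.1 * Q z.2.2.1 * Q z.2.2.2) (hsum P Q hP hQ)]
    exact div_nonneg (sub_nonneg.2 (hPQ P Q hP hQ)) hMp.le
  · rw [hexp _ hD1, div_le_iff₀ hMp]
    linarith
end

section
/- Let X₁, X₂ be finite sets, n ≥ 1, M₁, M₂ ≥ 1, and let x₁, …, x_{M₁} ∈ X₁ⁿ and y₁, …, y_{M₂} ∈ X₂ⁿ. Let Q : X₁²×X₂² → ℝ be a tensor such that ⟨P^{⊗2}⊗R^{⊗2}, Q⟩ ≥ 0 for every P ∈ Δ(X₁) and R ∈ Δ(X₂). Then Σ_{i₁=1}^{M₁} Σ_{i₂=1}^{M₁} Σ_{j₁=1}^{M₂} Σ_{j₂=1}^{M₂} ⟨τ_{x_{i₁}, x_{i₂}, y_{j₁}, y_{j₂}}, Q⟩ ≥ 0, where the sum runs over all ordered index pairs including repeated indices. -/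
/-- The type (empirical distribution) of a length-`n` vector `v` over alphabet `X`. -/
noncomputable def typeOf {X : Type*} [DecidableEq X] {n : ℕ} (v : Fin n → X) : X → ℝ :=
  fun a => ((Finset.univ.filter (fun j => v j = a)).card : ℝ) / n

theorem sum_typeOf {X : Type*} [Fintype X] [DecidableEq X] {n : ℕ} (v : Fin n → X) (f : X → ℝ) :
    ∑ a, typeOf v a * f a = (∑ k, f (v k)) / n := by
  have h : ∀ a, typeOf v a * f a = (∑ k, if v k = a then f a else 0) / n := by
    intro a
    simp only [typeOf, Finset.card_filter, Nat.cast_sum]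
    rw [div_mul_eq_mul_div, Finset.sum_mul]
    congr 1
    exact Finset.sum_congr rfl fun k _ => by split_ifs <;> simp
  simp only [h]
  rw [← Finset.sum_div, Finset.sum_comm]
  simp

theorem isDist_typeOf {X : Type*} [Fintype X] [DecidableEq X] {n : ℕ} (hn : 1 ≤ n)
    (v : Fin n → X) : IsDist (typeOf v) := by
  refine ⟨fun a => by unfold typeOf; positivity, ?_⟩
  have h := sum_typeOf v (fun _ => 1)
  have hn' : (n : ℝ) ≠ 0 := by positivity
  simpa [hn'] using h

theorem sum_four {X₁ X₂ : Type*} [Fintype X₁] [DecidableEq X₁] [Fintype X₂] [DecidableEq X₂]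
    {M₁ M₂ : ℕ} (u : Fin M₁ → X₁) (w : Fin M₂ → X₂) (Q : X₁ × X₁ × X₂ × X₂ → ℝ) :
    ∑ z : X₁ × X₁ × X₂ × X₂,
      typeOf u z.1 * typeOf u z.2.1 * typeOf w z.2.2.1 * typeOf w z.2.2.2 * Q z
    = (∑ i₁, ∑ i₂, ∑ j₁, ∑ j₂, Q (u i₁, u i₂, w j₁, w j₂)) / (M₁ ^ 2 * M₂ ^ 2 : ℝ) := by
  simp only [Fintype.sum_prod_type, mul_assoc, ← Finset.mul_sum, sum_typeOf, ← Finset.sum_div,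
    div_div]
  congr 1
  ring

theorem stmt_14 (X₁ X₂ : Type*) [Fintype X₁] [DecidableEq X₁] [Fintype X₂] [DecidableEq X₂]
    (n M₁ M₂ : ℕ) (hn : 1 ≤ n) (hM₁ : 1 ≤ M₁) (hM₂ : 1 ≤ M₂)
    (x : Fin M₁ → Fin n → X₁) (y : Fin M₂ → Fin n → X₂)
    (Q : X₁ × X₁ × X₂ × X₂ → ℝ)
    (hQ : ∀ (P : X₁ → ℝ) (R : X₂ → ℝ), IsDist P → IsDist R →
      0 ≤ ∑ z : X₁ × X₁ × X₂ × X₂, P z.1 * P z.2.1 * R z.2.2.1 * R z.2.2.2 * Q z) :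
    0 ≤ ∑ i₁ : Fin M₁, ∑ i₂ : Fin M₁, ∑ j₁ : Fin M₂, ∑ j₂ : Fin M₂,
          ∑ z : X₁ × X₁ × X₂ × X₂,
            typeOf (fun k => (x i₁ k, x i₂ k, y j₁ k, y j₂ k)) z * Q z := by
  simp only [sum_typeOf, ← Finset.sum_div]
  refine div_nonneg ?_ (Nat.cast_nonneg n)
  have key : ∀ k, 0 ≤ ∑ i₁, ∑ i₂, ∑ j₁, ∑ j₂, Q (x i₁ k, x i₂ k, y j₁ k, y j₂ k) := by
    intro k
    have h := hQ _ _ (isDist_typeOf hM₁ fun i => x i k) (isDist_typeOf hM₂ fun j => y j k)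
    rw [sum_four] at h
    have hp : (0 : ℝ) < (M₁ : ℝ) ^ 2 * (M₂ : ℝ) ^ 2 := by positivity
    have h2 := mul_nonneg h hp.le
    rwa [div_mul_cancel₀ _ hp.ne'] at h2
  have h3 := Finset.sum_nonneg fun k (_ : k ∈ Finset.univ) => key k
  rw [Finset.sum_comm] at h3
  refine h3.trans_eq (Finset.sum_congr rfl fun i₁ _ => ?_)
  rw [Finset.sum_comm]
  refine Finset.sum_congr rfl fun i₂ _ => ?_
  rw [Finset.sum_comm]
  refine Finset.sum_congr rfl fun j₁ _ => ?_
  rw [Finset.sum_comm]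
end

section
/- Let X₁, X₂ be finite sets, let P₁ ∈ Δ(X₁) and P₂ ∈ Δ(X₂), and let K₁₂ ⊆ Δ(X₁²×X₂²), K₁ ⊆ Δ(X₁²×X₂), K₂ ⊆ Δ(X₁×X₂²) be sets of distributions such that d_∞(P₁^{⊗2}⊗P₂^{⊗2}, D) ≥ ρ₁₂ for all D ∈ K₁₂, d_∞(P₁^{⊗2}⊗P₂, D) ≥ ρ₁ for all D ∈ K₁, and d_∞(P₁⊗P₂^{⊗2}, D) ≥ ρ₂ for all D ∈ K₂, where ρ₁₂, ρ₁, ρ₂ > 0. Then there exist constants R₁ > 0, R₂ > 0 and n₀ (depending only on |X₁|, |X₂|, ρ₁₂, ρ₁, ρ₂) such that for every n ≥ n₀ there exist codewords x₁, …, x_{M₁} ∈ X₁ⁿ and y₁, …, y_{M₂} ∈ X₂ⁿ with M₁ ≥ 2^{R₁ n} and M₂ ≥ 2^{R₂ n}, satisfying: for all i₁ ≠ i₂ and j₁ ≠ j₂, τ_{x_{i₁}, x_{i₂}, y_{j₁}, y_{j₂}} ∉ K₁₂; for all i₁ ≠ i₂ and all j, τ_{x_{i₁}, x_{i₂}, y_j}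 ∉ K₁; and for all i and all j₁ ≠ j₂, τ_{x_i, y_{j₁}, y_{j₂}} ∉ K₂. -/
open Finset in
theorem mgf_aux {C : Type*} [Fintype C] (w : C → ℝ) (hw : IsDist w) (f : C → ℝ)
    (hf0 : ∀ c, 0 ≤ f c) (hf1 : ∀ c, f c ≤ 1) (s : ℝ) (hs : |s| ≤ 1) :
    ∑ c, w c * Real.exp (s * (f c - ∑ c, w c * f c)) ≤ Real.exp (s ^ 2) := by
  obtain ⟨hw0, hw1⟩ := hw
  set p := ∑ c, w c * f c with hp
  have hp0 : 0 ≤ p := sum_nonneg fun c _ => mul_nonneg (hw0 c) (hf0 c)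
  have hp1 : p ≤ 1 := by
    rw [← hw1]
    exact sum_le_sum fun c _ => mul_le_of_le_one_right (hw0 c) (hf1 c)
  have key : ∀ c, w c * Real.exp (s * (f c - p)) ≤ w c * (1 + s ^ 2) + s * (w c * f c - p * w c) := by
    intro c
    have hd : |f c - p| ≤ 1 := by
      rw [abs_le]; constructor <;> linarith [hf0 c, hf1 c]
    have hu : |s * (f c - p)| ≤ |s| := by
      rw [abs_mul]; exact mul_le_of_le_one_right (abs_nonneg _) hd
    have h1 := (abs_le.1 (Real.abs_exp_sub_one_sub_id_le (hu.trans hs))).2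
    have h2 : (s * (f c - p)) ^ 2 ≤ s ^ 2 := sq_le_sq.2 hu
    have h3 : Real.exp (s * (f c - p)) ≤ 1 + s * (f c - p) + s ^ 2 := by linarith
    have := mul_le_mul_of_nonneg_left h3 (hw0 c)
    linarith
  calc _ ≤ ∑ c, (w c * (1 + s ^ 2) + s * (w c * f c - p * w c)) := sum_le_sum fun c _ => key c
    _ = 1 + s ^ 2 := by
      rw [sum_add_distrib, ← sum_mul, ← mul_sum, sum_sub_distrib, ← mul_sum, hw1, ← hp]; ring
    _ ≤ _ := by linarith [Real.add_one_le_exp (s ^ 2)]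

open Finset in
theorem sum_prod_aux {C : Type*} [Fintype C] [DecidableEq C] {ι : Type*} [Fintype ι] [DecidableEq ι]
    (g : ι → C → ℝ) : ∑ c : ι → C, ∏ k, g k (c k) = ∏ k, ∑ a, g k a := by
  rw [prod_univ_sum, Fintype.piFinset_univ]

open Finset in
theorem exists_good {C T : Type*} [Fintype C] [Fintype T] (w : C → ℝ) (hw : IsDist w)
    (f : T → C → ℝ) (hf0 : ∀ t c, 0 ≤ f t c) (hf1 : ∀ t c, f t c ≤ 1) (n : ℕ) (ρ : ℝ)
    (hρ : 0 < ρ) (hρ1 : ρ ≤ 1)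
    (hn : (Fintype.card T : ℝ) * (2 * Real.exp (-(n * ρ ^ 2 / 4))) < 1) :
    ∃ c : Fin n → C, ∀ t, |(∑ k, f t (c k)) - n * ∑ a, w a * f t a| < n * ρ := by
  classical
  by_contra! hcon
  set p : T → ℝ := fun t => ∑ a, w a * f t a with hp
  set B : (Fin n → C) → T → ℝ → ℝ := fun c t s =>
    Real.exp (s * ((∑ k, f t (c k)) - n * p t)) * Real.exp (-(n * ρ ^ 2 / 2)) with hB
  have hBpos : ∀ c t s, 0 ≤ B c t s := fun c t s => by positivity
  have hWn : ∀ c : Fin n → C, 0 ≤ ∏ k, w (c k) := fun c => prod_nonneg fun k _ => hw.1 _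
  have h1 : ∑ c : Fin n → C, ∏ k, w (c k) = 1 := by
    rw [sum_prod_aux (fun _ : Fin n => w)]; simp [hw.2]
  have h2 : ∀ c : Fin n → C, 1 ≤ ∑ t, (B c t (ρ / 2) + B c t (-(ρ / 2))) := by
    intro c
    obtain ⟨t, ht⟩ := hcon c
    refine le_trans ?_ (single_le_sum (f := fun t => B c t (ρ / 2) + B c t (-(ρ / 2)))
      (fun t _ => add_nonneg (hBpos _ _ _) (hBpos _ _ _)) (mem_univ t))
    change n * ρ ≤ |(∑ k, f t (c k)) - n * p t| at ht
    rcases le_abs.1 ht with h | h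
    · have : 1 ≤ B c t (ρ / 2) := by
        simp only [hB]
        rw [← Real.exp_add]
        apply Real.one_le_exp
        nlinarith
      linarith [hBpos c t (-(ρ / 2))]
    · have : 1 ≤ B c t (-(ρ / 2)) := by
        simp only [hB]
        rw [← Real.exp_add]
        apply Real.one_le_exp
        nlinarith
      linarith [hBpos c t (ρ / 2)]
  have h3 : ∀ t s, |s| = ρ / 2 → ∑ c : Fin n → C, (∏ k, w (c k)) * B c t s ≤
      Real.exp (-(n * ρ ^ 2 / 4)) := by
    intro t s hs
    have hs2 : s ^ 2 = ρ ^ 2 / 4 := by rw [← sq_abs, hs]; ring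
    have e : ∀ c : Fin n → C, (∏ k, w (c k)) * B c t s =
        (∏ k, w (c k) * Real.exp (s * (f t (c k) - p t))) * Real.exp (-(n * ρ ^ 2 / 2)) := by
      intro c
      rw [prod_mul_distrib, ← Real.exp_sum, ← mul_sum, sum_sub_distrib]
      simp [hB, mul_assoc]
    rw [sum_congr rfl fun c _ => e c, ← sum_mul,
      sum_prod_aux (fun _ : Fin n => fun a => w a * Real.exp (s * (f t a - p t)))]
    have hm := mgf_aux w hw (f t) (hf0 t) (hf1 t) s (by rw [hs]; linarith)
    rw [prod_const, card_univ, Fintype.card_fin]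
    calc _ ≤ Real.exp (s ^ 2) ^ n * Real.exp (-(n * ρ ^ 2 / 2)) := by
          gcongr
          exact sum_nonneg fun a _ => mul_nonneg (hw.1 a) (Real.exp_pos _).le
      _ = _ := by
          rw [← Real.exp_nat_mul, ← Real.exp_add, hs2]; congr 1; ring
  have h4 : (1 : ℝ) ≤ ∑ t : T, 2 * Real.exp (-(n * ρ ^ 2 / 4)) := by
    calc (1 : ℝ) = ∑ c : Fin n → C, (∏ k, w (c k)) * 1 := by simp [h1]
      _ ≤ ∑ c : Fin n → C, (∏ k, w (c k)) * ∑ t, (B c t (ρ / 2) + B c t (-(ρ / 2))) :=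
        sum_le_sum fun c _ => mul_le_mul_of_nonneg_left (h2 c) (hWn c)
      _ = ∑ t, (∑ c : Fin n → C, (∏ k, w (c k)) * B c t (ρ / 2) +
            ∑ c : Fin n → C, (∏ k, w (c k)) * B c t (-(ρ / 2))) := by
        simp only [mul_sum]
        rw [sum_comm]
        simp only [mul_add, sum_add_distrib]
      _ ≤ _ := by
        apply sum_le_sum
        intro t _
        have a1 := h3 t (ρ / 2) (abs_of_pos (by linarith))
        have a2 := h3 t (-(ρ / 2)) (by rw [abs_neg]; exact abs_of_pos (by linarith))
        linarith
  rw [sum_const, card_univ, nsmul_eq_mul] at h4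
  linarith

open Finset in
theorem marg_one {X ι : Type*} [Fintype X] [DecidableEq X] [Fintype ι] [DecidableEq ι]
    (P : X → ℝ) (hP : IsDist P) (i : ι) (a : X) :
    ∑ c : ι → X, (∏ k, P (c k)) * (if c i = a then 1 else 0) = P a := by
  have e : ∀ c : ι → X, (∏ k, P (c k)) * (if c i = a then 1 else 0) =
      ∏ k, P (c k) * (if k = i then (if c k = a then 1 else 0) else 1) := by
    intro c
    rw [prod_mul_distrib, prod_ite_eq' univ i (fun k => if c k = a then (1 : ℝ) else 0)]
    simp
  rw [sum_congr rfl fun c _ => e c, sum_prod_aux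
    (fun k x => P x * (if k = i then (if x = a then 1 else 0) else 1)),
    prod_eq_single i]
  · simp
  · intro b _ hb
    simp [hb, hP.2]
  · simp

open Finset in
theorem marg_two {X ι : Type*} [Fintype X] [DecidableEq X] [Fintype ι] [DecidableEq ι]
    (P : X → ℝ) (hP : IsDist P) (i j : ι) (hij : i ≠ j) (a b : X) :
    ∑ c : ι → X, (∏ k, P (c k)) * ((if c i = a then 1 else 0) * (if c j = b then 1 else 0)) =
      P a * P b := by
  have e : ∀ c : ι → X, (∏ k, P (c k)) *
      ((if c i = a then 1 else 0) * (if c j = b then 1 else 0)) =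
      ∏ k, P (c k) * ((if k = i then (if c k = a then 1 else 0) else 1) *
        (if k = j then (if c k = b then 1 else 0) else 1)) := by
    intro c
    rw [prod_mul_distrib, prod_mul_distrib,
      prod_ite_eq' univ i (fun k => if c k = a then (1 : ℝ) else 0),
      prod_ite_eq' univ j (fun k => if c k = b then (1 : ℝ) else 0)]
    simp
  rw [sum_congr rfl fun c _ => e c, sum_prod_aux
    (fun k x => P x * ((if k = i then (if x = a then 1 else 0) else 1) *
        (if k = j then (if x = b then 1 else 0) else 1))),
    prod_eq_mul i j hij]
  · simp [hij, hij.symm]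
  · intro b _ hb
    simp [hb.1, hb.2, hP.2]
  · simp
  · simp

open Finset in
theorem isDist_pi {X ι : Type*} [Fintype X] [DecidableEq X] [Fintype ι] [DecidableEq ι]
    (P : X → ℝ) (hP : IsDist P) : IsDist (fun c : ι → X => ∏ k, P (c k)) := by
  refine ⟨fun c => prod_nonneg fun k _ => hP.1 _, ?_⟩
  rw [sum_prod_aux (fun _ : ι => P)]; simp [hP.2]

open Finset in
theorem sum_pair_aux {A B : Type*} [Fintype A] [Fintype B] (u f : A → ℝ) (v g : B → ℝ) :
    ∑ c : A × B, (u c.1 * v c.2) * (f c.1 * g c.2) = (∑ a, u a * f a) * ∑ b, v b * g b := by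
  rw [sum_mul_sum, Fintype.sum_prod_type]
  exact sum_congr rfl fun a _ => sum_congr rfl fun b _ => by ring

open Finset in
theorem typeOf_aux {Z : Type*} [DecidableEq Z] {n : ℕ} (hn : 0 < n) (v : Fin n → Z) (z : Z)
    (f : Fin n → ℝ) (hf : ∀ k, f k = if v k = z then 1 else 0) (p q ρ ρ' : ℝ) (hρ : ρ ≤ ρ')
    (hpq : p = q) (h : |(∑ k, f k) - n * p| < n * ρ) (h' : ρ' ≤ |q - typeOf v z|) : False := by
  subst hpq
  have hn' : (0 : ℝ) < n := by exact_mod_cast hn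
  have e : ∑ k, f k = n * typeOf v z := by
    simp only [hf, typeOf, sum_boole]
    field_simp
  rw [e, ← mul_sub, abs_mul, abs_of_pos hn', abs_sub_comm] at h
  have := lt_of_mul_lt_mul_left h hn'.le
  linarith

theorem stmt_19 (X₁ X₂ : Type*) [Fintype X₁] [DecidableEq X₁] [Fintype X₂] [DecidableEq X₂]
    (ρ₁₂ ρ₁ ρ₂ : ℝ) (hρ₁₂ : 0 < ρ₁₂) (hρ₁ : 0 < ρ₁) (hρ₂ : 0 < ρ₂) :
    ∃ (R₁ R₂ : ℝ) (n₀ : ℕ), 0 < R₁ ∧ 0 < R₂ ∧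
      ∀ (P₁ : X₁ → ℝ) (P₂ : X₂ → ℝ), IsDist P₁ → IsDist P₂ →
      ∀ (K12 : Set (X₁ × X₁ × X₂ × X₂ → ℝ)) (K1 : Set (X₁ × X₁ × X₂ → ℝ))
        (K2 : Set (X₁ × X₂ × X₂ → ℝ)),
        (∀ D ∈ K12, ∃ z : X₁ × X₁ × X₂ × X₂,
          ρ₁₂ ≤ |P₁ z.1 * P₁ z.2.1 * P₂ z.2.2.1 * P₂ z.2.2.2 - D z|) →
        (∀ D ∈ K1, ∃ z : X₁ × X₁ × X₂,
          ρ₁ ≤ |P₁ z.1 * P₁ z.2.1 * P₂ z.2.2 - D z|) →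
        (∀ D ∈ K2, ∃ z : X₁ × X₂ × X₂,
          ρ₂ ≤ |P₁ z.1 * P₂ z.2.1 * P₂ z.2.2 - D z|) →
        ∀ n : ℕ, n₀ ≤ n →
          ∃ (M₁ M₂ : ℕ) (x : Fin M₁ → Fin n → X₁) (y : Fin M₂ → Fin n → X₂),
            (2 : ℝ) ^ (R₁ * (n : ℝ)) ≤ (M₁ : ℝ) ∧
            (2 : ℝ) ^ (R₂ * (n : ℝ)) ≤ (M₂ : ℝ) ∧
            (∀ i₁ i₂ : Fin M₁, i₁ ≠ i₂ → ∀ j₁ j₂ : Fin M₂, j₁ ≠ j₂ →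
              typeOf (fun k => (x i₁ k, x i₂ k, y j₁ k, y j₂ k)) ∉ K12) ∧
            (∀ i₁ i₂ : Fin M₁, i₁ ≠ i₂ → ∀ j : Fin M₂,
              typeOf (fun k => (x i₁ k, x i₂ k, y j k)) ∉ K1) ∧
            (∀ i : Fin M₁, ∀ j₁ j₂ : Fin M₂, j₁ ≠ j₂ →
              typeOf (fun k => (x i k, y j₁ k, y j₂ k)) ∉ K2) := by
  classical
  set ρ : ℝ := min 1 (min ρ₁₂ (min ρ₁ ρ₂)) with hρdef
  have hρ : 0 < ρ := by simp [hρdef, hρ₁₂, hρ₁, hρ₂]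
  have hρ1 : ρ ≤ 1 := min_le_left _ _
  have hr12 : ρ ≤ ρ₁₂ := (min_le_right _ _).trans (min_le_left _ _)
  have hr1 : ρ ≤ ρ₁ := (min_le_right _ _).trans ((min_le_right _ _).trans (min_le_left _ _))
  have hr2 : ρ ≤ ρ₂ := (min_le_right _ _).trans ((min_le_right _ _).trans (min_le_right _ _))
  set A : ℝ := (Fintype.card (X₁ × X₁ × X₂ × X₂) : ℝ) + Fintype.card (X₁ × X₁ × X₂)
    + Fintype.card (X₁ × X₂ × X₂) with hA
  have hA0 : 0 ≤ A := by positivity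
  have hlim : Filter.Tendsto (fun n : ℕ => 32 * A * Real.exp (-((n : ℝ) * (ρ ^ 2 / 8))))
      Filter.atTop (nhds (32 * A * 0)) := by
    apply Filter.Tendsto.const_mul
    apply Real.tendsto_exp_neg_atTop_nhds_zero.comp
    exact tendsto_natCast_atTop_atTop.atTop_mul_const (by positivity)
  rw [mul_zero] at hlim
  obtain ⟨n₁, hn₁⟩ := Filter.eventually_atTop.1 (hlim.eventually (gt_mem_nhds one_pos))
  have hl2 : 0 < Real.log 2 := Real.log_pos (by norm_num)
  set R : ℝ := ρ ^ 2 / 32 / Real.log 2 with hR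
  have hR0 : 0 < R := by positivity
  refine ⟨R, R, max n₁ 1, hR0, hR0, ?_⟩
  intro P₁ P₂ hP₁ hP₂ K12 K1 K2 hK12 hK1 hK2 n hn
  have hnn : n₁ ≤ n := (le_max_left _ _).trans hn
  have hn1 : 0 < n := (le_max_right _ _).trans hn
  set E : ℝ := Real.exp (n * (ρ ^ 2 / 32)) with hE
  have hpow : (2 : ℝ) ^ (R * (n : ℝ)) = E := by
    rw [Real.rpow_def_of_pos (by norm_num), hE, hR]
    congr 1
    field_simp
  have hE1 : 1 ≤ E := Real.one_le_exp (by positivity)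
  set M : ℕ := ⌈E⌉₊ with hM
  have hM1 : E ≤ M := Nat.le_ceil _
  have hM2 : (M : ℝ) ≤ 2 * E := by
    have := Nat.ceil_lt_add_one (zero_le_one.trans hE1)
    rw [← hM] at this
    linarith
  have hMone : (1 : ℝ) ≤ M := hE1.trans hM1
  let T := (Fin M × Fin M × Fin M × Fin M × (X₁ × X₁ × X₂ × X₂)) ⊕
    (Fin M × Fin M × Fin M × (X₁ × X₁ × X₂)) ⊕ (Fin M × Fin M × Fin M × (X₁ × X₂ × X₂))
  let C := (Fin M → X₁) × (Fin M → X₂)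
  let w : C → ℝ := fun c => (∏ k, P₁ (c.1 k)) * ∏ k, P₂ (c.2 k)
  have hw₁ := isDist_pi (ι := Fin M) P₁ hP₁
  have hw₂ := isDist_pi (ι := Fin M) P₂ hP₂
  have hw : IsDist w := by
    refine ⟨fun c => mul_nonneg (hw₁.1 c.1) (hw₂.1 c.2), ?_⟩
    have := sum_pair_aux (fun c : Fin M → X₁ => ∏ k, P₁ (c k)) (fun _ => 1)
      (fun c : Fin M → X₂ => ∏ k, P₂ (c k)) (fun _ => 1)
    simp only [mul_one] at this
    rw [hw₁.2, hw₂.2, mul_one] at this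
    exact this
  let f : T → C → ℝ := fun t c => match t with
    | Sum.inl (i₁, i₂, j₁, j₂, z) =>
      ((if c.1 i₁ = z.1 then 1 else 0) * (if c.1 i₂ = z.2.1 then 1 else 0)) *
        ((if c.2 j₁ = z.2.2.1 then 1 else 0) * (if c.2 j₂ = z.2.2.2 then 1 else 0))
    | Sum.inr (Sum.inl (i₁, i₂, j, z)) =>
      ((if c.1 i₁ = z.1 then 1 else 0) * (if c.1 i₂ = z.2.1 then 1 else 0)) *
        (if c.2 j = z.2.2 then 1 else 0)
    | Sum.inr (Sum.inr (i, j₁, j₂, z)) =>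
      (if c.1 i = z.1 then 1 else 0) *
        ((if c.2 j₁ = z.2.1 then 1 else 0) * (if c.2 j₂ = z.2.2 then 1 else 0))
  have hf : ∀ t c, 0 ≤ f t c ∧ f t c ≤ 1 := by
    rintro (⟨i₁, i₂, j₁, j₂, z⟩ | ⟨i₁, i₂, j, z⟩ | ⟨i, j₁, j₂, z⟩) c <;>
    · simp only [f]
      split_ifs <;> norm_num
  have hT : (Fintype.card T : ℝ) ≤ 16 * E ^ 4 * A := by
    have e : (Fintype.card T : ℝ) = (M : ℝ) ^ 4 * Fintype.card (X₁ × X₁ × X₂ × X₂) +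
        (M : ℝ) ^ 3 * Fintype.card (X₁ × X₁ × X₂) + (M : ℝ) ^ 3 * Fintype.card (X₁ × X₂ × X₂) := by
      simp only [T, Fintype.card_sum, Fintype.card_prod, Fintype.card_fin]
      push_cast
      ring
    have h34 : (M : ℝ) ^ 3 ≤ (M : ℝ) ^ 4 := pow_le_pow_right₀ hMone (by norm_num)
    have h4 : (M : ℝ) ^ 4 ≤ 16 * E ^ 4 := by
      calc (M : ℝ) ^ 4 ≤ (2 * E) ^ 4 := by gcongr
        _ = _ := by ring
    calc (Fintype.card T : ℝ) ≤ (M : ℝ) ^ 4 * A := by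
          rw [e, hA, mul_add, mul_add]; gcongr
      _ ≤ _ := by gcongr
  have hcard : (Fintype.card T : ℝ) * (2 * Real.exp (-(n * ρ ^ 2 / 4))) < 1 := by
    calc (Fintype.card T : ℝ) * (2 * Real.exp (-(n * ρ ^ 2 / 4)))
        ≤ (16 * E ^ 4 * A) * (2 * Real.exp (-(n * ρ ^ 2 / 4))) := by gcongr
      _ = 32 * A * (E ^ 4 * Real.exp (-(n * ρ ^ 2 / 4))) := by ring
      _ = 32 * A * Real.exp (-((n : ℝ) * (ρ ^ 2 / 8))) := by
        congr 1
        rw [hE, ← Real.exp_nat_mul, ← Real.exp_add]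
        congr 1
        push_cast
        ring
      _ < 1 := hn₁ n hnn
  obtain ⟨c, hc⟩ := exists_good w hw f (fun t c => (hf t c).1) (fun t c => (hf t c).2) n ρ hρ hρ1 hcard
  refine ⟨M, M, fun i k => (c k).1 i, fun j k => (c k).2 j, hpow.trans_le hM1, hpow.trans_le hM1,
    ?_, ?_, ?_⟩
  · intro i₁ i₂ hi j₁ j₂ hj hmem
    obtain ⟨z, hz⟩ := hK12 _ hmem
    refine typeOf_aux hn1 _ z (fun k => f (Sum.inl (i₁, i₂, j₁, j₂, z)) (c k)) ?_ _ _ ρ ρ₁₂ hr12 ?_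
      (hc (Sum.inl (i₁, i₂, j₁, j₂, z))) hz
    · intro k
      obtain ⟨a, b, c, d⟩ := z
      simp only [f, Prod.mk.injEq, ite_and]
      split_ifs <;> norm_num
    · refine (sum_pair_aux (fun c : Fin M → X₁ => ∏ k, P₁ (c k))
        (fun c => (if c i₁ = z.1 then 1 else 0) * (if c i₂ = z.2.1 then 1 else 0))
        (fun c : Fin M → X₂ => ∏ k, P₂ (c k))
        (fun c => (if c j₁ = z.2.2.1 then 1 else 0) * (if c j₂ = z.2.2.2 then 1 else 0))).trans ?_
      rw [marg_two P₁ hP₁ i₁ i₂ hi, marg_two P₂ hP₂ j₁ j₂ hj]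
      ring
  · intro i₁ i₂ hi j hmem
    obtain ⟨z, hz⟩ := hK1 _ hmem
    refine typeOf_aux hn1 _ z (fun k => f (Sum.inr (Sum.inl (i₁, i₂, j, z))) (c k)) ?_ _ _ ρ ρ₁ hr1 ?_
      (hc (Sum.inr (Sum.inl (i₁, i₂, j, z)))) hz
    · intro k
      obtain ⟨a, b, c⟩ := z
      simp only [f, Prod.mk.injEq, ite_and]
      split_ifs <;> norm_num
    · refine (sum_pair_aux (fun c : Fin M → X₁ => ∏ k, P₁ (c k))
        (fun c => (if c i₁ = z.1 then 1 else 0) * (if c i₂ = z.2.1 then 1 else 0))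
        (fun c : Fin M → X₂ => ∏ k, P₂ (c k))
        (fun c => (if c j = z.2.2 then 1 else 0))).trans ?_
      rw [marg_two P₁ hP₁ i₁ i₂ hi, marg_one P₂ hP₂ j]
  · intro i j₁ j₂ hj hmem
    obtain ⟨z, hz⟩ := hK2 _ hmem
    refine typeOf_aux hn1 _ z (fun k => f (Sum.inr (Sum.inr (i, j₁, j₂, z))) (c k)) ?_ _ _ ρ ρ₂ hr2 ?_
      (hc (Sum.inr (Sum.inr (i, j₁, j₂, z)))) hz
    · intro k
      obtain ⟨a, b, c⟩ := z
      simp only [f, Prod.mk.injEq, ite_and]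
      split_ifs <;> norm_num
    · refine (sum_pair_aux (fun c : Fin M → X₁ => ∏ k, P₁ (c k))
        (fun c => (if c i = z.1 then 1 else 0))
        (fun c : Fin M → X₂ => ∏ k, P₂ (c k))
        (fun c => (if c j₁ = z.2.1 then 1 else 0) * (if c j₂ = z.2.2 then 1 else 0))).trans ?_
      rw [marg_one P₁ hP₁ i, marg_two P₂ hP₂ j₁ j₂ hj]
      ring
end
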